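/- Let S = (X, (φ_j)_{j∈ℕ}, (q_j)_{j∈ℕ}) be a γ-uniformly contractive mpCIFS on a nonempty compact metric space X, and let τ ∈ (γ,1). Then the countable Markov operator M(μ)(f) = sup_{j∈ℕ} ( q_j + μ(f ∘ φ_j) ) satisfies d̃_{γ,τ}( M(μ), M(ν) ) ≤ (γ/τ) · d̃_{γ,τ}(μ, ν) for all idempotent probabilities μ, ν on X; in particular M is a Banach contraction with respect to the metric d̃_{γ,τ}. -/

import Mathlib

def IsIdempotentProb {X : Type*} [TopologicalSpace X] (μ : C(X, ℝ) → ℝ) : Prop :=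
  (∀ (c : ℝ) (f : C(X, ℝ)), μ (ContinuousMap.const X c + f) = c + μ f) ∧
  (∀ f g : C(X, ℝ), μ (f ⊔ g) = max (μ f) (μ g)) ∧
  μ 0 = 0

/-- The pseudometric `d_a` on idempotent probabilities. -/
noncomputable def dLip {X : Type*} [MetricSpace X] (a : ℝ) (μ ν : C(X, ℝ) → ℝ) : ℝ :=
  sSup { r : ℝ | ∃ g : C(X, ℝ), LipschitzWith (Real.toNNReal a) g ∧ r = |μ g - ν g| }

/-- The metric `d̃_{β,τ}` on idempotent probabilities. -/
noncomputable def dtilde {X : Type*} [MetricSpace X] (β τ : ℝ) (μ ν : C(X, ℝ) → ℝ) : ℝ :=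
  ∑' i : ℤ, (τ ^ i.natAbs / β ^ i) * dLip (β ^ i) μ ν

theorem IIP.mono {X : Type*} [TopologicalSpace X] {μ : C(X, ℝ) → ℝ} (hμ : IsIdempotentProb μ)
    {f g : C(X, ℝ)} (h : f ≤ g) : μ f ≤ μ g := by
  have := hμ.2.1 f g
  rw [sup_eq_right.mpr h] at this
  rw [this]; exact le_max_left _ _

theorem IIP.const {X : Type*} [TopologicalSpace X] {μ : C(X, ℝ) → ℝ} (hμ : IsIdempotentProb μ)
    (c : ℝ) : μ (ContinuousMap.const X c) = c := by
  have := hμ.1 c 0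
  rw [hμ.2.2] at this
  simpa using this

theorem IIP.le {X : Type*} [TopologicalSpace X] {μ : C(X, ℝ) → ℝ} (hμ : IsIdempotentProb μ)
    {f : C(X, ℝ)} {c : ℝ} (h : ∀ x, f x ≤ c) : μ f ≤ c := by
  rw [← IIP.const hμ c]
  exact IIP.mono hμ (fun x => h x)

theorem IIP.ge {X : Type*} [TopologicalSpace X] {μ : C(X, ℝ) → ℝ} (hμ : IsIdempotentProb μ)
    {f : C(X, ℝ)} {c : ℝ} (h : ∀ x, c ≤ f x) : c ≤ μ f := by
  rw [← IIP.const hμ c]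
  exact IIP.mono hμ (fun x => h x)

theorem IIP.diff {X : Type*} [MetricSpace X] [CompactSpace X] [Nonempty X]
    {μ ν : C(X, ℝ) → ℝ} (hμ : IsIdempotentProb μ) (hν : IsIdempotentProb ν) {a : ℝ} (ha : 0 ≤ a)
    {g : C(X, ℝ)} (hg : LipschitzWith (Real.toNNReal a) g) :
    |μ g - ν g| ≤ 2 * (a * Metric.diam (Set.univ : Set X)) := by
  obtain ⟨x0⟩ := ‹Nonempty X›
  have key : ∀ x, |g x - g x0| ≤ a * Metric.diam (Set.univ : Set X) := by
    intro x
    have h1 := hg.dist_le_mul x x0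
    rw [Real.dist_eq, Real.coe_toNNReal a ha] at h1
    refine h1.trans (mul_le_mul_of_nonneg_left ?_ ha)
    exact Metric.dist_le_diam_of_mem isCompact_univ.isBounded (Set.mem_univ _) (Set.mem_univ _)
  have h1 := IIP.le hμ (f := g) (fun x => by linarith [(abs_le.mp (key x)).2] :
    ∀ x, g x ≤ g x0 + a * Metric.diam (Set.univ : Set X))
  have h2 := IIP.le hν (f := g) (fun x => by linarith [(abs_le.mp (key x)).2] :
    ∀ x, g x ≤ g x0 + a * Metric.diam (Set.univ : Set X))
  have h3 := IIP.ge hμ (f := g) (fun x => by linarith [(abs_le.mp (key x)).1] :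
    ∀ x, g x0 - a * Metric.diam (Set.univ : Set X) ≤ g x)
  have h4 := IIP.ge hν (f := g) (fun x => by linarith [(abs_le.mp (key x)).1] :
    ∀ x, g x0 - a * Metric.diam (Set.univ : Set X) ≤ g x)
  rw [abs_le]; constructor <;> linarith

theorem dLip_nonneg {X : Type*} [MetricSpace X] (a : ℝ) (μ ν : C(X, ℝ) → ℝ) :
    0 ≤ dLip a μ ν := by
  apply Real.sSup_nonneg
  rintro r ⟨g, _, rfl⟩
  exact abs_nonneg _

theorem dLip_le {X : Type*} [MetricSpace X] {a C : ℝ} {μ ν : C(X, ℝ) → ℝ}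
    (h : ∀ g : C(X, ℝ), LipschitzWith (Real.toNNReal a) g → |μ g - ν g| ≤ C) :
    dLip a μ ν ≤ C := by
  apply csSup_le
  · exact ⟨_, 0, LipschitzWith.const' (0 : ℝ), rfl⟩
  · rintro r ⟨g, hg, rfl⟩
    exact h g hg

theorem le_dLip {X : Type*} [MetricSpace X] [CompactSpace X] [Nonempty X]
    {μ ν : C(X, ℝ) → ℝ} (hμ : IsIdempotentProb μ) (hν : IsIdempotentProb ν) {a : ℝ} (ha : 0 ≤ a)
    {g : C(X, ℝ)} (hg : LipschitzWith (Real.toNNReal a) g) : |μ g - ν g| ≤ dLip a μ ν := by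
  apply le_csSup
  · refine ⟨2 * (a * Metric.diam (Set.univ : Set X)), ?_⟩
    rintro r ⟨g, hg, rfl⟩
    exact IIP.diff hμ hν ha hg
  · exact ⟨g, hg, rfl⟩

theorem markov_bdd {X : Type*} [MetricSpace X] [CompactSpace X]
    {μ : C(X, ℝ) → ℝ} (hμ : IsIdempotentProb μ) (ψ : ℕ → C(X, X)) (q : ℕ → ℝ) (hq : ∀ j, q j ≤ 0)
    (f : C(X, ℝ)) : BddAbove (Set.range fun j => q j + μ (f.comp (ψ j))) := by
  refine ⟨‖f‖, ?_⟩
  rintro _ ⟨j, rfl⟩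
  have : μ (f.comp (ψ j)) ≤ ‖f‖ :=
    IIP.le hμ (fun x => (le_abs_self _).trans (f.norm_coe_le_norm (ψ j x)))
  have := hq j
  dsimp only
  linarith

theorem markov_dLip {X : Type*} [MetricSpace X] [CompactSpace X] [Nonempty X]
    {γ : ℝ} (hγ0 : 0 < γ) (ψ : ℕ → C(X, X)) (hψ : ∀ j, LipschitzWith (Real.toNNReal γ) (ψ j))
    (q : ℕ → ℝ) (hq : ∀ j, q j ≤ 0)
    {μ ν : C(X, ℝ) → ℝ} (hμ : IsIdempotentProb μ) (hν : IsIdempotentProb ν) {a : ℝ} (ha : 0 ≤ a) :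
    dLip a (fun f : C(X, ℝ) => ⨆ j : ℕ, (q j + μ (f.comp (ψ j))))
      (fun f : C(X, ℝ) => ⨆ j : ℕ, (q j + ν (f.comp (ψ j)))) ≤ dLip (a * γ) μ ν := by
  apply dLip_le
  intro g hg
  have key : ∀ j, |μ (g.comp (ψ j)) - ν (g.comp (ψ j))| ≤ dLip (a * γ) μ ν := by
    intro j
    apply le_dLip hμ hν (by positivity)
    rw [Real.toNNReal_mul ha]
    exact hg.comp (hψ j)
  have h1 : (⨆ j : ℕ, (q j + μ (g.comp (ψ j)))) ≤
      (⨆ j : ℕ, (q j + ν (g.comp (ψ j)))) + dLip (a * γ) μ ν := by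
    apply ciSup_le
    intro j
    have := le_ciSup (markov_bdd hν ψ q hq g) j
    linarith [(abs_le.mp (key j)).2]
  have h2 : (⨆ j : ℕ, (q j + ν (g.comp (ψ j)))) ≤
      (⨆ j : ℕ, (q j + μ (g.comp (ψ j)))) + dLip (a * γ) μ ν := by
    apply ciSup_le
    intro j
    have := le_ciSup (markov_bdd hμ ψ q hq g) j
    linarith [(abs_le.mp (key j)).1]
  rw [abs_le]; constructor <;> linarith

theorem summable_pow_natAbs {τ : ℝ} (h0 : 0 < τ) (h1 : τ < 1) :
    Summable (fun i : ℤ => τ ^ i.natAbs) := by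
  apply Summable.of_nat_of_neg
  · simpa using summable_geometric_of_lt_one h0.le h1
  · simpa using summable_geometric_of_lt_one h0.le h1

theorem markov_operator_contraction_countable
    {X : Type*} [MetricSpace X] [CompactSpace X] [Nonempty X]
    (γ : ℝ) (hγ0 : 0 < γ) (hγ1 : γ < 1)
    (φ : ℕ → X → X) (hφ : ∀ j, LipschitzWith (Real.toNNReal γ) (φ j))
    (q : ℕ → ℝ) (hq : ∀ j, q j ≤ 0) (hqsup : (⨆ j, q j) = 0)
    (τ : ℝ) (hτγ : γ < τ) (hτ1 : τ < 1)
    (μ ν : C(X, ℝ) → ℝ) (hμ : IsIdempotentProb μ) (hν : IsIdempotentProb ν) :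
    dtilde γ τ
        (fun f : C(X, ℝ) => ⨆ j : ℕ, (q j + μ (f.comp ⟨φ j, (hφ j).continuous⟩)))
        (fun f : C(X, ℝ) => ⨆ j : ℕ, (q j + ν (f.comp ⟨φ j, (hφ j).continuous⟩))) ≤
      (γ / τ) * dtilde γ τ μ ν := by
  have hτ0 : 0 < τ := hγ0.trans hτγ
  have hsum : Summable (fun i : ℤ => (τ ^ i.natAbs / γ ^ i) * dLip (γ ^ i) μ ν) := by
    refine Summable.of_nonneg_of_le (fun i => ?_) (fun i => ?_)
      ((summable_pow_natAbs hτ0 hτ1).mul_right (2 * Metric.diam (Set.univ : Set X)))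
    · exact mul_nonneg (by positivity) (dLip_nonneg _ _ _)
    · have hp : 0 < γ ^ i := zpow_pos hγ0 i
      have h := dLip_le (fun g hg => IIP.diff hμ hν hp.le hg)
      calc (τ ^ i.natAbs / γ ^ i) * dLip (γ ^ i) μ ν
          ≤ (τ ^ i.natAbs / γ ^ i) * (2 * (γ ^ i * Metric.diam (Set.univ : Set X))) :=
            mul_le_mul_of_nonneg_left h (by positivity)
        _ = _ := by field_simp
  have hsum' := ((Equiv.addRight (1 : ℤ)).summable_iff.mpr hsum).mul_left (γ / τ)
  have hle : ∀ i : ℤ, (τ ^ i.natAbs / γ ^ i) * dLip (γ ^ i)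
        (fun f : C(X, ℝ) => ⨆ j : ℕ, (q j + μ (f.comp ⟨φ j, (hφ j).continuous⟩)))
        (fun f : C(X, ℝ) => ⨆ j : ℕ, (q j + ν (f.comp ⟨φ j, (hφ j).continuous⟩))) ≤
      (γ / τ) * ((τ ^ (i + 1).natAbs / γ ^ (i + 1)) * dLip (γ ^ (i + 1)) μ ν) := by
    intro i
    have hp : 0 < γ ^ i := zpow_pos hγ0 i
    have h := markov_dLip hγ0 (fun j => ⟨φ j, (hφ j).continuous⟩) hφ q hq hμ hν hp.le
    rw [zpow_add_one₀ hγ0.ne']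
    have hd := dLip_nonneg (γ ^ i * γ) μ ν
    refine (mul_le_mul_of_nonneg_left h (by positivity)).trans ?_
    rw [← mul_assoc]
    refine mul_le_mul_of_nonneg_right ?_ hd
    have hpow : τ ^ (i.natAbs + 1) ≤ τ ^ (i + 1).natAbs :=
      pow_le_pow_of_le_one hτ0.le hτ1.le (by omega)
    have e : γ / τ * (τ ^ (i + 1).natAbs / (γ ^ i * γ)) = (τ ^ (i + 1).natAbs / τ) / γ ^ i := by
      field_simp
    rw [e]
    refine div_le_div_of_nonneg_right ?_ hp.le
    rw [le_div_iff₀ hτ0, ← pow_succ]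
    exact hpow
  unfold dtilde
  have hs1 := Summable.of_nonneg_of_le
    (fun i : ℤ => mul_nonneg (by positivity) (dLip_nonneg _ _ _)) hle hsum'
  refine (hs1.tsum_le_tsum hle hsum').trans (le_of_eq ?_)
  rw [← tsum_mul_left]
  exact (Equiv.addRight (1 : ℤ)).tsum_eq
    (fun i : ℤ => (γ / τ) * ((τ ^ i.natAbs / γ ^ i) * dLip (γ ^ i) μ ν))
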